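/- For every a, b ∈ ℂ, the formulas defining R_{a,b} determine a module over the N=2 Ramond algebra 𝔤: the prescribed operators on the ℤ/2-graded vector space with even basis {v_i^+ : i ∈ ℤ} and odd basis {v_i^- : i ∈ ℤ} satisfy all the defining relations of a 𝔤-module with c₀ = 0. -/

import Mathlib

open Submodule

/-- A module over the `N = 2` Ramond algebra `𝔤`: a `ℤ/2`-graded complex vector
space `V = even ⊕ odd` with parity-preserving operators `L m`, `H m`,
parity-reversing operators `Gp m` (`G_m^+`), `Gm m` (`G_m^-`), and a scalar `c₀`
(the action of the central element `C`), subject to the defining relations. -/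
structure RamondRep (V : Type) [AddCommGroup V] [Module ℂ V] : Type where
  L : ℤ → V →ₗ[ℂ] V
  H : ℤ → V →ₗ[ℂ] V
  Gp : ℤ → V →ₗ[ℂ] V
  Gm : ℤ → V →ₗ[ℂ] V
  c₀ : ℂ
  even : Submodule ℂ V
  odd : Submodule ℂ V
  grading : IsCompl even odd
  L_even : ∀ (m : ℤ), ∀ v ∈ even, L m v ∈ even
  L_odd : ∀ (m : ℤ), ∀ v ∈ odd, L m v ∈ odd
  H_even : ∀ (m : ℤ), ∀ v ∈ even, H m v ∈ even
  H_odd : ∀ (m : ℤ), ∀ v ∈ odd, H m v ∈ odd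
  Gp_even : ∀ (m : ℤ), ∀ v ∈ even, Gp m v ∈ odd
  Gp_odd : ∀ (m : ℤ), ∀ v ∈ odd, Gp m v ∈ even
  Gm_even : ∀ (m : ℤ), ∀ v ∈ even, Gm m v ∈ odd
  Gm_odd : ∀ (m : ℤ), ∀ v ∈ odd, Gm m v ∈ even
  rel_LL : ∀ (m n : ℤ) (v : V),
    L m (L n v) - L n (L m v) =
      ((n : ℂ) - (m : ℂ)) • L (m + n) v +
        ((1 / 12 : ℂ) * ((n : ℂ) ^ 3 - (n : ℂ)) *
          (if m + n = 0 then (1 : ℂ) else 0) * c₀) • v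
  rel_HH : ∀ (m n : ℤ) (v : V),
    H m (H n v) - H n (H m v) =
      ((1 / 3 : ℂ) * (m : ℂ) * (if m + n = 0 then (1 : ℂ) else 0) * c₀) • v
  rel_LH : ∀ (m n : ℤ) (v : V),
    L m (H n v) - H n (L m v) = (n : ℂ) • H (m + n) v
  rel_LGp : ∀ (m p : ℤ) (v : V),
    L m (Gp p v) - Gp p (L m v) = ((p : ℂ) - (m : ℂ) / 2) • Gp (p + m) v
  rel_LGm : ∀ (m p : ℤ) (v : V),
    L m (Gm p v) - Gm p (L m v) = ((p : ℂ) - (m : ℂ) / 2) • Gm (p + m) v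
  rel_HGp : ∀ (m p : ℤ) (v : V),
    H m (Gp p v) - Gp p (H m v) = Gp (m + p) v
  rel_HGm : ∀ (m p : ℤ) (v : V),
    H m (Gm p v) - Gm p (H m v) = -(Gm (m + p) v)
  rel_GpGm : ∀ (p q : ℤ) (v : V),
    Gp p (Gm q v) + Gm q (Gp p v) =
      (-2 : ℂ) • L (p + q) v + ((p : ℂ) - (q : ℂ)) • H (p + q) v +
        ((1 / 3 : ℂ) * ((p : ℂ) ^ 2 - 1 / 4) *
          (if p + q = 0 then (1 : ℂ) else 0) * c₀) • v
  rel_GpGp : ∀ (p q : ℤ) (v : V), Gp p (Gp q v) + Gp q (Gp p v) = 0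
  rel_GmGm : ∀ (p q : ℤ) (v : V), Gm p (Gm q v) + Gm q (Gm p v) = 0

namespace RamondRep

variable {V : Type} [AddCommGroup V] [Module ℂ V]

/-- The weight space `V_μ = {v ∈ V : L₀ v = μ v}`. -/
def wt (ρ : RamondRep V) (μ : ℂ) : Submodule ℂ V :=
  Module.End.eigenspace (ρ.L 0) μ

/-- The parity components, indexed by `ZMod 2`. -/
def parity (ρ : RamondRep V) (τ : ZMod 2) : Submodule ℂ V :=
  if τ = 0 then ρ.even else ρ.odd

/-- `V` is a weight module: it is the sum of its weight spaces. -/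
def IsWeight (ρ : RamondRep V) : Prop := (⨆ μ : ℂ, ρ.wt μ) = ⊤

/-- `V` is cuspidal: a weight module with uniformly bounded weight multiplicities
in each parity. -/
def Cuspidal (ρ : RamondRep V) : Prop :=
  ρ.IsWeight ∧ ∃ p : ℕ, ∀ (μ : ℂ) (τ : ZMod 2),
    Module.rank ℂ ↥(ρ.wt μ ⊓ ρ.parity τ) ≤ (p : Cardinal)

/-- A subspace invariant under all the operators. -/
def IsSubmod (ρ : RamondRep V) (W : Submodule ℂ V) : Prop :=
  (∀ (m : ℤ), ∀ v ∈ W, ρ.L m v ∈ W) ∧ (∀ (m : ℤ), ∀ v ∈ W, ρ.H m v ∈ W) ∧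
    (∀ (m : ℤ), ∀ v ∈ W, ρ.Gp m v ∈ W) ∧ (∀ (m : ℤ), ∀ v ∈ W, ρ.Gm m v ∈ W)

/-- A graded subspace invariant under all the operators. -/
def IsGradedSubmod (ρ : RamondRep V) (W : Submodule ℂ V) : Prop :=
  ρ.IsSubmod W ∧ W = (W ⊓ ρ.even) ⊔ (W ⊓ ρ.odd)

/-- The trivial representation: all operators act by zero. -/
def IsTrivialRep (ρ : RamondRep V) : Prop :=
  ∀ (m : ℤ) (v : V), ρ.L m v = 0 ∧ ρ.H m v = 0 ∧ ρ.Gp m v = 0 ∧ ρ.Gm m v = 0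

/-- `V` is simple: nontrivial, and its only graded submodules are `⊥` and `⊤`. -/
def IsSimple (ρ : RamondRep V) : Prop :=
  ¬ ρ.IsTrivialRep ∧
    ∀ W : Submodule ℂ V, ρ.IsGradedSubmod W → W = ⊥ ∨ W = ⊤

/-- `V` is generated by `v` as a `𝔤`-module. -/
def GeneratedBy (ρ : RamondRep V) (v : V) : Prop :=
  ∀ W : Submodule ℂ V, ρ.IsSubmod W → v ∈ W → W = ⊤

/-- `V` is a highest weight module. -/
def IsHighestWeight (ρ : RamondRep V) : Prop :=
  ∃ v : V, v ≠ 0 ∧ ρ.GeneratedBy v ∧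
    (∃ h h' : ℂ, ρ.L 0 v = h • v ∧ ρ.H 0 v = h' • v) ∧
    (∀ m : ℤ, 0 < m → ρ.L m v = 0 ∧ ρ.H m v = 0 ∧ ρ.Gp m v = 0 ∧ ρ.Gm m v = 0) ∧
    ρ.Gp 0 v = 0

/-- `V` is a lowest weight module. -/
def IsLowestWeight (ρ : RamondRep V) : Prop :=
  ∃ v : V, v ≠ 0 ∧ ρ.GeneratedBy v ∧
    (∃ h h' : ℂ, ρ.L 0 v = h • v ∧ ρ.H 0 v = h' • v) ∧
    (∀ m : ℤ, m < 0 → ρ.L m v = 0 ∧ ρ.H m v = 0 ∧ ρ.Gp m v = 0 ∧ ρ.Gm m v = 0) ∧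
    ρ.Gm 0 v = 0

end RamondRep

/-- The family `(vp i)ᵢ` (even) and `(vm i)ᵢ` (odd) realizes the `𝔤`-module
`R_{a,b}` inside `(W, σ)`: the `vp i, vm i` form a basis, span the even/odd
parts respectively, `c₀ = 0`, and the action is given by the `R_{a,b}` formulas. -/
def RamondRep.IsRab {W : Type} [AddCommGroup W] [Module ℂ W] (σ : RamondRep W)
    (vp vm : ℤ → W) (a b : ℂ) : Prop :=
  σ.c₀ = 0 ∧
  LinearIndependent ℂ (fun x : Bool × ℤ => if x.1 then vm x.2 else vp x.2) ∧
  Submodule.span ℂ (Set.range vp ∪ Set.range vm) = ⊤ ∧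
  σ.even = Submodule.span ℂ (Set.range vp) ∧
  σ.odd = Submodule.span ℂ (Set.range vm) ∧
  (∀ m i : ℤ, σ.L m (vp i) = (a + (i : ℂ) + b * (m : ℂ)) • vp (m + i)) ∧
  (∀ m i : ℤ, σ.L m (vm i) = (a + (i : ℂ) + (b - 1 / 2) * (m : ℂ)) • vm (m + i)) ∧
  (∀ m i : ℤ, σ.H m (vp i) = (2 - 2 * b) • vp (m + i)) ∧
  (∀ m i : ℤ, σ.H m (vm i) = (1 - 2 * b) • vm (m + i)) ∧
  (∀ m i : ℤ, σ.Gm m (vp i) = vm (m + i)) ∧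
  (∀ m i : ℤ, σ.Gp m (vm i) =
    (-(2 * a + (4 * b - 2) * (m : ℂ) + 2 * (i : ℂ))) • vp (m + i)) ∧
  (∀ m i : ℤ, σ.Gp m (vp i) = 0) ∧
  (∀ m i : ℤ, σ.Gm m (vm i) = 0)

/-!
Every operator of `R_{a,b}` is a weighted shift: it sends `v_i^±` to a scalar multiple of a basis
vector of index `m + i` and either preserves or reverses the parity. A product of weighted shifts is
again a weighted shift, and both sides of each defining relation shift in the same way, so the
relation amounts to a polynomial identity between the weights. The central terms disappear because
`c₀ = 0`.
-/

section ParityComponent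

variable {R V S M : Type*} [Semiring R] [AddCommMonoid V] [Module R V]

/-- The homogeneous component of parity `s` of a space with basis `e`: the span of the basis vectors
`e (s, i)`. Parities form an arbitrary type `S`; for `R_{a,b}` it is `Bool`, with `false` even. -/
def parityComponent (e : Module.Basis (S × M) R V) (s : S) : Submodule R V :=
  span R (Set.range fun i => e (s, i))

theorem isCompl_parityComponent (e : Module.Basis (Bool × M) R V) :
    IsCompl (parityComponent e false) (parityComponent e true) := by
  have range_eq_image (s : Bool) : (Set.range fun i => e (s, i)) = e '' {x | x.1 = s} := by
    ext v
    simp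
  have isCompl_fst : IsCompl {x : Bool × M | x.1 = false} {x | x.1 = true} :=
    eq_compl_iff_isCompl.1 (by ext; simp)
  rw [parityComponent, parityComponent, range_eq_image, range_eq_image]
  exact e.linearIndependent.isCompl_span_image e.span_eq isCompl_fst

end ParityComponent

section WeightedShift

variable {R V S M : Type*} [CommSemiring R] [AddCommMonoid V] [Module R V]

/-- The weighted shift `e (s, i) ↦ w s i • e (τ s, m + i)` of degree `m` on a space with basis
`e`; the map `τ` is its effect on parity. -/
noncomputable def weightedShift [Add M] (e : Module.Basis (S × M) R V) (τ : S → S) (m : M)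
    (w : S → M → R) : Module.End R V :=
  e.constr R fun x => w x.1 x.2 • e (τ x.1, m + x.2)

theorem weightedShift_basis [Add M] (e : Module.Basis (S × M) R V) (τ : S → S) (m : M)
    (w : S → M → R) (s : S) (i : M) :
    weightedShift e τ m w (e (s, i)) = w s i • e (τ s, m + i) :=
  e.constr_basis R _ _

theorem weightedShift_mem_parityComponent [Add M] (e : Module.Basis (S × M) R V) (τ : S → S)
    (m : M) (w : S → M → R) (s : S) :
    ∀ v ∈ parityComponent e s, weightedShift e τ m w v ∈ parityComponent e (τ s) := by
  suffices parityComponent e s ≤ (parityComponent e (τ s)).comap (weightedShift e τ m w) from this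
  refine span_le.2 (Set.range_subset_iff.2 fun i => ?_)
  rw [SetLike.mem_coe, mem_comap, weightedShift_basis]
  exact smul_mem _ _ (subset_span ⟨m + i, rfl⟩)

theorem weightedShift_zero [Add M] (e : Module.Basis (S × M) R V) (τ : S → S) (m : M) :
    weightedShift e τ m 0 = 0 :=
  e.ext fun ⟨s, i⟩ => by simp [weightedShift_basis]

theorem weightedShift_add [Add M] (e : Module.Basis (S × M) R V) (τ : S → S) (m : M)
    (w w' : S → M → R) :
    weightedShift e τ m (w + w') = weightedShift e τ m w + weightedShift e τ m w' :=
  e.ext fun ⟨s, i⟩ => by simp [weightedShift_basis, add_smul]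

theorem weightedShift_smul [Add M] (e : Module.Basis (S × M) R V) (τ : S → S) (m : M) (c : R)
    (w : S → M → R) :
    weightedShift e τ m (c • w) = c • weightedShift e τ m w :=
  e.ext fun ⟨s, i⟩ => by simp [weightedShift_basis, mul_smul]

theorem weightedShift_mul [AddSemigroup M] (e : Module.Basis (S × M) R V) (τ τ' : S → S)
    (m n : M) (w w' : S → M → R) :
    weightedShift e τ m w * weightedShift e τ' n w' =
      weightedShift e (τ ∘ τ') (m + n) fun s i => w (τ' s) (n + i) * w' s i :=
  e.ext fun ⟨s, i⟩ => by
    simp [weightedShift_basis, smul_smul, add_assoc, mul_comm]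

theorem lie_weightedShift {R V : Type*} [CommRing R] [AddCommGroup V] [Module R V]
    [AddCommSemigroup M] (e : Module.Basis (S × M) R V) {τ τ' : S → S}
    (h : Function.Commute τ τ') (m n : M) (w w' : S → M → R) :
    ⁅weightedShift e τ m w, weightedShift e τ' n w'⁆ =
      weightedShift e (τ ∘ τ') (m + n) fun s i =>
        w (τ' s) (n + i) * w' s i - w' (τ s) (m + i) * w s i := by
  rw [Ring.lie_def, weightedShift_mul, weightedShift_mul, ← h.comp_eq, add_comm n m,
    sub_eq_iff_eq_add, ← weightedShift_add]
  exact congrArg _ (funext₂ fun _ _ => (sub_add_cancel _ _).symm)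

end WeightedShift

namespace RamondRep

variable {V : Type} [AddCommGroup V] [Module ℂ V] (e : Module.Basis (Bool × ℤ) ℂ V) (a b : ℂ)

/-- The operator `L_m` of `R_{a,b}`. -/
noncomputable def rabL (m : ℤ) : Module.End ℂ V :=
  weightedShift e id m fun
    | false, i => a + i + b * m
    | true, i => a + i + (b - 1 / 2) * m

/-- The operator `H_m` of `R_{a,b}`. -/
noncomputable def rabH (m : ℤ) : Module.End ℂ V :=
  weightedShift e id m fun
    | false, _ => 2 - 2 * b
    | true, _ => 1 - 2 * b

/-- The operator `G_m^+` of `R_{a,b}`. -/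
noncomputable def rabGp (m : ℤ) : Module.End ℂ V :=
  weightedShift e not m fun
    | false, _ => 0
    | true, i => -(2 * a + (4 * b - 2) * m + 2 * i)

/-- The operator `G_m^-` of `R_{a,b}`. -/
noncomputable def rabGm (m : ℤ) : Module.End ℂ V :=
  weightedShift e not m fun
    | false, _ => 1
    | true, _ => 0

theorem rabL_basis_false (m i : ℤ) :
    rabL e a b m (e (false, i)) = (a + i + b * m) • e (false, m + i) :=
  weightedShift_basis ..

theorem rabL_basis_true (m i : ℤ) :
    rabL e a b m (e (true, i)) = (a + i + (b - 1 / 2) * m) • e (true, m + i) :=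
  weightedShift_basis ..

theorem rabH_basis_false (m i : ℤ) : rabH e b m (e (false, i)) = (2 - 2 * b) • e (false, m + i) :=
  weightedShift_basis ..

theorem rabH_basis_true (m i : ℤ) : rabH e b m (e (true, i)) = (1 - 2 * b) • e (true, m + i) :=
  weightedShift_basis ..

theorem rabGp_basis_false (m i : ℤ) : rabGp e a b m (e (false, i)) = 0 :=
  (weightedShift_basis ..).trans (zero_smul ..)

theorem rabGp_basis_true (m i : ℤ) :
    rabGp e a b m (e (true, i)) = (-(2 * a + (4 * b - 2) * m + 2 * i)) • e (false, m + i) :=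
  weightedShift_basis ..

theorem rabGm_basis_false (m i : ℤ) : rabGm e m (e (false, i)) = e (true, m + i) :=
  (weightedShift_basis ..).trans (one_smul ..)

theorem rabGm_basis_true (m i : ℤ) : rabGm e m (e (true, i)) = 0 :=
  (weightedShift_basis ..).trans (zero_smul ..)

theorem lie_rabL_rabL (m n : ℤ) :
    ⁅rabL e a b m, rabL e a b n⁆ = ((n : ℂ) - m) • rabL e a b (m + n) := by
  rw [rabL, rabL, rabL, lie_weightedShift e (.refl id), ← weightedShift_smul]
  congr 1
  ext (_ | _) i <;>
    simp only [id, Pi.smul_apply, smul_eq_mul, Int.cast_add] <;>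
    ring

theorem lie_rabH_rabH (m n : ℤ) : ⁅rabH e b m, rabH e b n⁆ = 0 := by
  rw [rabH, rabH, lie_weightedShift e (.refl id), ← weightedShift_zero e id (m + n)]
  congr 1
  ext (_ | _) i <;> simp

theorem lie_rabL_rabH (m n : ℤ) :
    ⁅rabL e a b m, rabH e b n⁆ = (n : ℂ) • rabH e b (m + n) := by
  rw [rabL, rabH, rabH, lie_weightedShift e (.refl id), ← weightedShift_smul]
  congr 1
  ext (_ | _) i <;>
    simp only [id, Pi.smul_apply, smul_eq_mul, Int.cast_add] <;>
    ring

theorem lie_rabL_rabGp (m p : ℤ) :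
    ⁅rabL e a b m, rabGp e a b p⁆ = ((p : ℂ) - m / 2) • rabGp e a b (p + m) := by
  rw [rabL, rabGp, rabGp, add_comm p m, lie_weightedShift e .id_left, ← weightedShift_smul]
  congr 1
  ext (_ | _) i <;>
    simp only [id, Bool.not_false, Bool.not_true, Pi.smul_apply, smul_eq_mul, Int.cast_add] <;>
    ring

theorem lie_rabL_rabGm (m p : ℤ) :
    ⁅rabL e a b m, rabGm e p⁆ = ((p : ℂ) - m / 2) • rabGm e (p + m) := by
  rw [rabL, rabGm, rabGm, add_comm p m, lie_weightedShift e .id_left, ← weightedShift_smul]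
  congr 1
  ext (_ | _) i <;>
    simp only [id, Bool.not_false, Bool.not_true, Pi.smul_apply, smul_eq_mul, Int.cast_add] <;>
    ring

theorem lie_rabH_rabGp (m p : ℤ) :
    ⁅rabH e b m, rabGp e a b p⁆ = rabGp e a b (m + p) := by
  rw [rabH, rabGp, rabGp, lie_weightedShift e .id_left]
  congr 1
  ext (_ | _) i <;>
    simp only [id, Bool.not_false, Bool.not_true, Int.cast_add] <;>
    ring

theorem lie_rabH_rabGm (m p : ℤ) : ⁅rabH e b m, rabGm e p⁆ = -rabGm e (m + p) := by
  rw [rabH, rabGm, rabGm, lie_weightedShift e .id_left, ← neg_one_smul ℂ, ← weightedShift_smul]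
  congr 1
  ext (_ | _) i <;>
    simp only [id, Bool.not_false, Bool.not_true, Pi.smul_apply, smul_eq_mul] <;>
    ring

theorem rabGp_mul_rabGm_add_rabGm_mul_rabGp (p q : ℤ) :
    rabGp e a b p * rabGm e q + rabGm e q * rabGp e a b p =
      (-2 : ℂ) • rabL e a b (p + q) + ((p : ℂ) - q) • rabH e b (p + q) := by
  simp only [rabGp, rabGm, rabL, rabH, weightedShift_mul, add_comm q p,
    Bool.involutive_not.comp_self, ← weightedShift_smul, ← weightedShift_add]
  congr 1
  ext (_ | _) i <;>
    simp only [Bool.not_false, Bool.not_true, Pi.add_apply, Pi.smul_apply, smul_eq_mul,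
      Int.cast_add] <;>
    ring

theorem rabGp_mul_rabGp (p q : ℤ) : rabGp e a b p * rabGp e a b q = 0 := by
  rw [rabGp, rabGp, weightedShift_mul, ← weightedShift_zero e (not ∘ not) (p + q)]
  congr 1
  ext (_ | _) i <;> simp

theorem rabGm_mul_rabGm (p q : ℤ) : rabGm e p * rabGm e q = 0 := by
  rw [rabGm, rabGm, weightedShift_mul, ← weightedShift_zero e (not ∘ not) (p + q)]
  congr 1
  ext (_ | _) i <;> simp

/-- The module `R_{a,b}` on a space with basis `e`, where `e (false, i)` plays the role of `v_i^+`
and `e (true, i)` that of `v_i^-`. -/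
noncomputable def rab : RamondRep V where
  L := rabL e a b
  H := rabH e b
  Gp := rabGp e a b
  Gm := rabGm e
  c₀ := 0
  even := parityComponent e false
  odd := parityComponent e true
  grading := isCompl_parityComponent e
  L_even m := weightedShift_mem_parityComponent e id m _ false
  L_odd m := weightedShift_mem_parityComponent e id m _ true
  H_even m := weightedShift_mem_parityComponent e id m _ false
  H_odd m := weightedShift_mem_parityComponent e id m _ true
  Gp_even m := weightedShift_mem_parityComponent e not m _ false
  Gp_odd m := weightedShift_mem_parityComponent e not m _ true
  Gm_even m := weightedShift_mem_parityComponent e not m _ false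
  Gm_odd m := weightedShift_mem_parityComponent e not m _ true
  rel_LL m n v := by simpa [Ring.lie_def] using LinearMap.congr_fun (lie_rabL_rabL e a b m n) v
  rel_HH m n v := by simpa [Ring.lie_def] using LinearMap.congr_fun (lie_rabH_rabH e b m n) v
  rel_LH m n v := LinearMap.congr_fun (lie_rabL_rabH e a b m n) v
  rel_LGp m p v := LinearMap.congr_fun (lie_rabL_rabGp e a b m p) v
  rel_LGm m p v := LinearMap.congr_fun (lie_rabL_rabGm e a b m p) v
  rel_HGp m p v := LinearMap.congr_fun (lie_rabH_rabGp e a b m p) v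
  rel_HGm m p v := LinearMap.congr_fun (lie_rabH_rabGm e b m p) v
  rel_GpGm p q v := by
    simpa using LinearMap.congr_fun (rabGp_mul_rabGm_add_rabGm_mul_rabGp e a b p q) v
  rel_GpGp p q v := by
    simp only [← Module.End.mul_apply, rabGp_mul_rabGp, LinearMap.zero_apply, add_zero]
  rel_GmGm p q v := by
    simp only [← Module.End.mul_apply, rabGm_mul_rabGm, LinearMap.zero_apply, add_zero]

end RamondRep

theorem stmt12_general {V : Type} [AddCommGroup V] [Module ℂ V]
    (e : Module.Basis (Bool × ℤ) ℂ V) (a b : ℂ) :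
    ∃ σ : RamondRep V, σ.IsRab (fun i => e (false, i)) (fun i => e (true, i)) a b := by
  have coe_basis : (fun x : Bool × ℤ => if x.1 then e (true, x.2) else e (false, x.2)) = e := by
    ext ⟨_ | _, i⟩ <;> rfl
  have linearIndependent := e.linearIndependent
  rw [← coe_basis] at linearIndependent
  have span_eq_top :
      span ℂ (Set.range (fun i => e (false, i)) ∪ Set.range fun i => e (true, i)) = ⊤ :=
    (span_union _ _).trans (isCompl_parityComponent e).sup_eq_top
  exact ⟨RamondRep.rab e a b, rfl, linearIndependent, span_eq_top, rfl, rfl,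
    RamondRep.rabL_basis_false e a b, RamondRep.rabL_basis_true e a b,
    RamondRep.rabH_basis_false e b, RamondRep.rabH_basis_true e b,
    RamondRep.rabGm_basis_false e, RamondRep.rabGp_basis_true e a b,
    RamondRep.rabGp_basis_false e a b, RamondRep.rabGm_basis_true e⟩

/-- for every `a, b ∈ ℂ` the formulas defining `R_{a,b}` determine a
module over the `N = 2` Ramond algebra (with `c₀ = 0`) on the vector space with
even basis `{v_i^+}` and odd basis `{v_i^-}`. -/
theorem stmt12 (a b : ℂ) :
    ∃ σ : RamondRep ((Bool × ℤ) →₀ ℂ),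
      σ.IsRab (fun i => Finsupp.single (false, i) (1 : ℂ))
        (fun i => Finsupp.single (true, i) (1 : ℂ)) a b :=
  stmt12_general Finsupp.basisSingleOne a b
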